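/- arXiv:1802.05897 — 3 statements merged into one kernel-verified Lean document; each statement's English description precedes it below -/
import Mathlib

section
/- For every integer n ≥ 1, W_{2(n-1)}·W_{2(n+1)} − W_{2n}² = W_0·W_4 − W_2²; that is, this quaternion expression is independent of n. -/
noncomputable def w (a b w0 w1 : ℝ) : ℕ → ℝ
  | 0 => w0
  | 1 => w1
  | n + 2 => (if Even (n + 2) then a else b) * w a b w0 w1 (n + 1) + w a b w0 w1 n

/-- The standard basis `e_0 = 1, e_1 = i, e_2 = j, e_3 = k` of the real quaternions. -/
noncomputable def e : ℕ → Quaternion ℝ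
  | 0 => 1
  | 1 => ⟨0, 1, 0, 0⟩
  | 2 => ⟨0, 0, 1, 0⟩
  | _ => ⟨0, 0, 0, 1⟩

/-- The generalized bi-periodic Fibonacci quaternion `W_n = ∑_{l=0}^{3} w_{n+l} e_l`. -/
noncomputable def W (a b w0 w1 : ℝ) (n : ℕ) : Quaternion ℝ :=
  ∑ l ∈ Finset.range 4, w a b w0 w1 (n + l) • e l

/-!
Eliminating `w_{m+1}` and `w_{m+3}` from three consecutive bi-periodic relations leaves
`w_{m+4} = (ab + 2) w_{m+2} - w_m`, whose coefficients no longer depend on the parity of `m`. Hence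
the quaternions satisfy `W_{m+4} = (ab + 2) W_{m+2} - W_m` too. For a recurrence
`u_{n+2} = c u_{n+1} - u_n` with `c` a scalar, the Cassini expression `u_n u_{n+2} - u_{n+1}²` is
constant even when the `u_n` do not commute, because
`(u_n + u_{n+2}) u_{n+2} = c u_{n+1} u_{n+2} = u_{n+1} (u_{n+1} + u_{n+3})`.
-/

section Recurrence

theorem add_four_eq_of_periodic_recurrence {R : Type*} [Ring R] {p u : ℕ → R}
    (hp : Function.Periodic p 2) (hu : ∀ n, u (n + 2) = p n * u (n + 1) + u n) (n : ℕ) :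
    u (n + 4) = (p n * p (n + 1) + 2) * u (n + 2) - u n := by
  have middle_term : p n * u (n + 1) = u (n + 2) - u n := eq_sub_of_add_eq (hu n).symm
  calc
    u (n + 4) = p n * u (n + 3) + u (n + 2) := by rw [hu (n + 2), hp n]
    _ = p n * p (n + 1) * u (n + 2) + p n * u (n + 1) + u (n + 2) := by
      rw [hu (n + 1), mul_add, mul_assoc]
    _ = (p n * p (n + 1) + 2) * u (n + 2) - u n := by
      rw [middle_term]
      noncomm_ring

variable {S A : Type*} [NonUnitalNonAssocRing A] [SMul S A] [IsScalarTower S A A]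
  [SMulCommClass S A A] {c : S}

theorem mul_sub_mul_self_eq_of_add_eq_smul {x y z t : A} (hy : x + z = c • y)
    (hz : y + t = c • z) : y * t - z * z = x * z - y * y := by
  have key : (x + z) * z = y * (y + t) := by rw [hy, hz, smul_mul_assoc, mul_smul_comm]
  rw [add_mul, mul_add] at key
  rw [sub_eq_sub_iff_add_eq_add, add_comm, ← key]

theorem cassini_eq_of_recurrence {u : ℕ → A} (hu : ∀ n, u (n + 2) = c • u (n + 1) - u n)
    (n : ℕ) : u n * u (n + 2) - u (n + 1) * u (n + 1) = u 0 * u 2 - u 1 * u 1 := by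
  have add_eq_smul (k : ℕ) : u k + u (k + 2) = c • u (k + 1) := by
    rw [hu k, add_sub_cancel]
  induction n with
  | zero => rfl
  | succ k ih =>
    exact (mul_sub_mul_self_eq_of_add_eq_smul (add_eq_smul k) (add_eq_smul (k + 1))).trans ih

end Recurrence

section BiperiodicFibonacci

variable (a b w0 w1 : ℝ)

theorem w_add_two (n : ℕ) :
    w a b w0 w1 (n + 2) = (if Even n then a else b) * w a b w0 w1 (n + 1) + w a b w0 w1 n := by
  simp only [w, Nat.even_add, even_two, iff_true]

theorem periodic_ite_even {α : Type*} (x y : α) :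
    Function.Periodic (fun n : ℕ ↦ if Even n then x else y) 2 := fun n ↦ by
  simp only [Nat.even_add, even_two, iff_true]

theorem ite_even_mul_ite_even_add_one {M : Type*} [CommMagma M] (x y : M) (n : ℕ) :
    (if Even n then x else y) * (if Even (n + 1) then x else y) = x * y := by
  by_cases h : Even n
  · simp only [h, Nat.even_add_one, not_true_eq_false, if_true, if_false]
  · simp only [h, Nat.even_add_one, not_false_eq_true, if_true, if_false, mul_comm]

theorem w_add_four (n : ℕ) :
    w a b w0 w1 (n + 4) = (a * b + 2) * w a b w0 w1 (n + 2) - w a b w0 w1 n := by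
  rw [← ite_even_mul_ite_even_add_one a b n]
  exact add_four_eq_of_periodic_recurrence (periodic_ite_even a b) (w_add_two a b w0 w1) n

theorem W_add_four (n : ℕ) :
    W a b w0 w1 (n + 4) = (a * b + 2) • W a b w0 w1 (n + 2) - W a b w0 w1 n := by
  simp only [W, Finset.smul_sum, ← Finset.sum_sub_distrib, smul_smul, ← sub_smul,
    add_right_comm n _ _, w_add_four]

end BiperiodicFibonacci

/-- `W_{2(n-1)} W_{2(n+1)} - W_{2n}²` is independent of `n`. -/
theorem stmt9 (a b w0 w1 : ℝ) (ha : a ≠ 0) (hb : b ≠ 0) (n : ℕ) (hn : 1 ≤ n) :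
    W a b w0 w1 (2 * (n - 1)) * W a b w0 w1 (2 * (n + 1)) - W a b w0 w1 (2 * n) ^ 2 =
      W a b w0 w1 0 * W a b w0 w1 4 - W a b w0 w1 2 ^ 2 := by
  obtain ⟨k, rfl⟩ := Nat.exists_eq_add_of_le' hn
  have hW (m : ℕ) : W a b w0 w1 (2 * (m + 2)) =
      (a * b + 2) • W a b w0 w1 (2 * (m + 1)) - W a b w0 w1 (2 * m) :=
    W_add_four a b w0 w1 (2 * m)
  rw [Nat.add_sub_cancel, sq, sq]
  exact cassini_eq_of_recurrence (u := fun m ↦ W a b w0 w1 (2 * m)) hW k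
end

section
/- For every integer n ≥ 1, Σ_{r=0}^{n-1} W_{2r} = (W_{2n} − W_{2n-2})/(ab) − (A·α*·β² − B·β*·α²)/(ab)². -/
/-- `qstar a b x = ∑_{l=0}^{3} (a^{ζ(l+1)}/(ab)^{⌊l/2⌋}) x^l e_l`; applied to `α`, `β`
it gives the quaternions `α*`, `β*`. -/
noncomputable def qstar (a b x : ℝ) : Quaternion ℝ :=
  ∑ l ∈ Finset.range 4, (a ^ ((l + 1) % 2) / (a * b) ^ (l / 2) * x ^ l) • e l

/-- `qstarstar a b x = ∑_{l=0}^{3} (a^{ζ(l)}/(ab)^{⌊(l+1)/2⌋}) x^l e_l`; applied to `α`, `β`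
it gives the quaternions `α**`, `β**`. -/
noncomputable def qstarstar (a b x : ℝ) : Quaternion ℝ :=
  ∑ l ∈ Finset.range 4, (a ^ (l % 2) / (a * b) ^ ((l + 1) / 2) * x ^ l) • e l

/-!
The sequence depends linearly on its initial values, so it suffices to treat initial values for
which it is explicit. If `x ^ 2 = a b (x + 1)`, the initial values `a, x` give
`W_{2m} = (x + 1) ^ m x*`, so the sum is geometric with `x ∑_{r<n} (x + 1) ^ r = (x + 1) ^ n - 1`.
The two roots are `α` and `β`, and Binet's formula writes `W` as `A / α` times the solution for `α`
minus `B / β` times the one for `β`; since `α β = -a b`, the constants left over from the two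
geometric sums are the terms in `α*` and `β*`.
-/

section BinetCoeff

variable {K : Type*} [Field K]

/-- The factor `a^{ζ(n+1)}/(ab)^{⌊n/2⌋}` in Binet's formula
`w_n = a^{ζ(n+1)}/(ab)^{⌊n/2⌋} (A α^{n-1} - B β^{n-1})`, and in the components of `α*` and `β*`.
The parity `ζ(n+1)` is encoded as `(n + 1) % 2`. -/
def binetCoeff (a b : K) (n : ℕ) : K :=
  a ^ ((n + 1) % 2) / (a * b) ^ (n / 2)

theorem binetCoeff_two_mul_add (a b : K) (m n : ℕ) :
    binetCoeff a b (2 * m + n) = binetCoeff a b n / (a * b) ^ m := by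
  have hmod : (2 * m + n + 1) % 2 = (n + 1) % 2 := by omega
  have hdiv : (2 * m + n) / 2 = n / 2 + m := by omega
  rw [binetCoeff, binetCoeff, hmod, hdiv, pow_add, div_div]

theorem ite_even_mul_binetCoeff_succ {a b : K} (hab : a * b ≠ 0) (n : ℕ) :
    (if Even n then a else b) * binetCoeff a b (n + 1) = binetCoeff a b n := by
  have hone : binetCoeff a b 1 = 1 := by simp [binetCoeff]
  obtain ⟨m, rfl | rfl⟩ := n.even_or_odd'
  · have hzero : binetCoeff a b 0 = a := by simp [binetCoeff]
    rw [if_pos (even_two_mul m), ← add_zero (2 * m), add_assoc, binetCoeff_two_mul_add,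
      binetCoeff_two_mul_add, zero_add, hone, hzero, mul_one_div]
  · have htwo : b * binetCoeff a b 2 = 1 := by
      simpa [binetCoeff, mul_div_assoc', mul_comm b a] using div_self hab
    rw [if_neg (Nat.not_even_two_mul_add_one m), add_assoc, binetCoeff_two_mul_add,
      binetCoeff_two_mul_add, one_add_one_eq_two, ← mul_div_assoc, htwo, hone]

theorem binetCoeff_mul_pow_add_two {a b x : K} (hab : a * b ≠ 0) (hx : x ^ 2 = a * b * (x + 1))
    (n : ℕ) :
    binetCoeff a b (n + 2) * x ^ (n + 2) =
      (if Even n then a else b) * (binetCoeff a b (n + 1) * x ^ (n + 1)) +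
        binetCoeff a b n * x ^ n := by
  have hshift : binetCoeff a b (n + 2) * (a * b) = binetCoeff a b n := by
    rw [add_comm, ← mul_one 2, binetCoeff_two_mul_add, pow_one, div_mul_cancel₀ _ hab]
  calc binetCoeff a b (n + 2) * x ^ (n + 2)
      = binetCoeff a b (n + 2) * (a * b) * (x + 1) * x ^ n := by rw [pow_add, hx]; ring
    _ = binetCoeff a b n * x ^ (n + 1) + binetCoeff a b n * x ^ n := by rw [hshift]; ring
    _ = _ := by rw [← mul_assoc, ite_even_mul_binetCoeff_succ hab]

theorem binet_initial_values {a b α β : K} (hab : a * b ≠ 0)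
    (hprod : α * β = -(a * b)) (hne : α - β ≠ 0) (w0 w1 : K) :
    (α * w1 + b * w0) / (α - β) / α * a - (β * w1 + b * w0) / (α - β) / β * a = w0 ∧
      (α * w1 + b * w0) / (α - β) - (β * w1 + b * w0) / (α - β) = w1 := by
  have hαβ : α * β ≠ 0 := hprod ▸ neg_ne_zero.mpr hab
  have hα : α ≠ 0 := left_ne_zero_of_mul hαβ
  have hβ : β ≠ 0 := right_ne_zero_of_mul hαβ
  constructor
  · field_simp
    linear_combination -(w0 * (α - β)) * hprod
  · field_simp
    ring

end BinetCoeff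

theorem geom_sum_add_one_of_sq_eq {K : Type*} [Field K] {c x : K} (hc : c ≠ 0)
    (hx : x ^ 2 = c * (x + 1)) (n : ℕ) :
    ∑ r ∈ Finset.range (n + 1), (x + 1) ^ r = c⁻¹ * ((x + 1) ^ (n + 1) - (x + 1) ^ n) - x⁻¹ := by
  have hx0 : x ≠ 0 := by
    rintro rfl
    exact hc (by simpa using hx.symm)
  rw [geom_sum_eq (by simpa using hx0), add_sub_cancel_right]
  field_simp
  linear_combination -(x + 1) ^ n * hx

theorem div_mul_inv_of_mul_eq_neg {K : Type*} [Field K] {c x y : K} (hc : c ≠ 0)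
    (hxy : x * y = -c) (z : K) : z / x * x⁻¹ = (c ^ 2)⁻¹ * (z * y ^ 2) := by
  have hxy0 : x * y ≠ 0 := hxy ▸ neg_ne_zero.mpr hc
  have hx : x ≠ 0 := left_ne_zero_of_mul hxy0
  have hy : y ≠ 0 := right_ne_zero_of_mul hxy0
  rw [← neg_sq c, ← hxy]
  field_simp

theorem w_mul_sub_mul (a b p q u0 u1 v0 v1 : ℝ) (n : ℕ) :
    w a b (p * u0 - q * v0) (p * u1 - q * v1) n = p * w a b u0 u1 n - q * w a b v0 v1 n := by
  induction n using Nat.twoStepInduction with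
  | zero => simp only [w]
  | one => simp only [w]
  | more n ih ih_succ =>
    simp only [w, ih, ih_succ]
    ring

theorem W_mul_sub_mul (a b p q u0 u1 v0 v1 : ℝ) (n : ℕ) :
    W a b (p * u0 - q * v0) (p * u1 - q * v1) n = p • W a b u0 u1 n - q • W a b v0 v1 n := by
  simp only [W, w_mul_sub_mul, sub_smul, mul_smul, Finset.sum_sub_distrib, Finset.smul_sum]

theorem W_eq_sub_of_mul_eq_neg {a b α β : ℝ} (hab : a * b ≠ 0) (hprod : α * β = -(a * b))
    (hne : α - β ≠ 0) (w0 w1 : ℝ) (n : ℕ) :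
    W a b w0 w1 n = ((α * w1 + b * w0) / (α - β) / α) • W a b a α n -
      ((β * w1 + b * w0) / (α - β) / β) • W a b a β n := by
  have hαβ : α * β ≠ 0 := hprod ▸ neg_ne_zero.mpr hab
  obtain ⟨hw0, hw1⟩ := binet_initial_values hab hprod hne w0 w1
  rw [← W_mul_sub_mul, hw0, div_mul_cancel₀ _ (left_ne_zero_of_mul hαβ),
    div_mul_cancel₀ _ (right_ne_zero_of_mul hαβ), hw1]

section Root

variable {a b x : ℝ}

theorem w_eq_binetCoeff_mul_pow (hab : a * b ≠ 0) (hx : x ^ 2 = a * b * (x + 1)) (n : ℕ) :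
    w a b a x n = binetCoeff a b n * x ^ n := by
  induction n using Nat.twoStepInduction with
  | zero => simp [w, binetCoeff]
  | one => simp [w, binetCoeff]
  | more n ih ih_succ =>
    rw [w, ih, ih_succ, binetCoeff_mul_pow_add_two hab hx]
    simp only [Nat.even_add, even_two, iff_true]

theorem W_two_mul_of_root (hab : a * b ≠ 0) (hx : x ^ 2 = a * b * (x + 1)) (m : ℕ) :
    W a b a x (2 * m) = (x + 1) ^ m • qstar a b x := by
  have hpow : x ^ (2 * m) / (a * b) ^ m = (x + 1) ^ m := by
    rw [pow_mul, hx, mul_pow, mul_div_cancel_left₀ _ (pow_ne_zero m hab)]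
  rw [W, qstar, Finset.smul_sum]
  refine Finset.sum_congr rfl fun l _ ↦ ?_
  rw [w_eq_binetCoeff_mul_pow hab hx, binetCoeff_two_mul_add, smul_smul, ← hpow, pow_add,
    binetCoeff]
  congr 1
  ring

theorem sum_range_W_two_mul_of_root (hab : a * b ≠ 0) (hx : x ^ 2 = a * b * (x + 1)) (n : ℕ) :
    ∑ r ∈ Finset.range (n + 1), W a b a x (2 * r) =
      (a * b)⁻¹ • (W a b a x (2 * (n + 1)) - W a b a x (2 * n)) - x⁻¹ • qstar a b x := by
  simp only [W_two_mul_of_root hab hx]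
  rw [← Finset.sum_smul, geom_sum_add_one_of_sq_eq hab hx, sub_smul, mul_smul, sub_smul]

end Root

/-- Summation formula for the even-indexed generalized bi-periodic Fibonacci quaternions. -/
theorem stmt14 (a b w0 w1 α β A B : ℝ)
    (ha : a ≠ 0) (hb : b ≠ 0) (hD : a ^ 2 * b ^ 2 + 4 * (a * b) > 0)
    (hα : α = (a * b + Real.sqrt (a ^ 2 * b ^ 2 + 4 * (a * b))) / 2)
    (hβ : β = (a * b - Real.sqrt (a ^ 2 * b ^ 2 + 4 * (a * b))) / 2)
    (hA : A = (α * w1 + b * w0) / (α - β))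
    (hB : B = (β * w1 + b * w0) / (α - β))
    (n : ℕ) (hn : 1 ≤ n) :
    ∑ r ∈ Finset.range n, W a b w0 w1 (2 * r) =
      (a * b)⁻¹ • (W a b w0 w1 (2 * n) - W a b w0 w1 (2 * n - 2)) -
        ((a * b) ^ 2)⁻¹ • ((A * β ^ 2) • qstar a b α - (B * α ^ 2) • qstar a b β) := by
  obtain ⟨m, rfl⟩ := Nat.exists_eq_add_of_le' hn
  have hab : a * b ≠ 0 := mul_ne_zero ha hb
  have hsum : α + β = a * b := by rw [hα, hβ]; ring
  have hprod : α * β = -(a * b) := by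
    rw [hα, hβ]
    linear_combination (-1 / 4) * Real.sq_sqrt hD.le
  have hdiff : α - β = √(a ^ 2 * b ^ 2 + 4 * (a * b)) := by rw [hα, hβ]; ring
  have hne : α - β ≠ 0 := hdiff ▸ (Real.sqrt_pos.mpr hD).ne'
  have hα_root : α ^ 2 = a * b * (α + 1) := by linear_combination α * hsum - hprod
  have hβ_root : β ^ 2 = a * b * (β + 1) := by linear_combination β * hsum - hprod
  have hα_const := div_mul_inv_of_mul_eq_neg hab hprod A
  have hβ_const := div_mul_inv_of_mul_eq_neg hab ((mul_comm β α).trans hprod) B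
  have hW := W_eq_sub_of_mul_eq_neg hab hprod hne w0 w1
  rw [← hA, ← hB] at hW
  simp only [hW, Finset.sum_sub_distrib, ← Finset.smul_sum,
    sum_range_W_two_mul_of_root hab hα_root, sum_range_W_two_mul_of_root hab hβ_root, smul_sub,
    smul_smul, hα_const, hβ_const, Nat.mul_add_one, Nat.add_sub_cancel]
  module
end

section
/- For every integer n ≥ 1, Σ_{r=0}^{n-1} W_{2r+1} = (W_{2n+1} − W_{2n-1})/(ab) + (A·α**·β − B·β**·α)/(ab). -/
/-!
Up to normalisation by powers of `a` and `a * b`, the powers of a root `x` of `x² = ab(x + 1)` solve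
the bi-periodic recurrence, and two steps of the recurrence multiply this solution by `x + 1`. Hence
`W (2r+1) = A (α + 1)^r α** - B (β + 1)^r β**`, and the sum over `r` is a pair of geometric sums
with ratios `α + 1` and `β + 1`. Their denominators are `α` and `β`, and `αβ = -ab` gives
`1/α = -β/(ab)` and `1/β = -α/(ab)`.
-/

/-- The solution of the bi-periodic Fibonacci recurrence attached to a root `x` of
`x ^ 2 = a * b * (x + 1)`, shifted by one: index `n` here corresponds to `w (n + 1)`.
The normalisation is that of `qstarstar`. -/
noncomputable def binetTerm (a b x : ℝ) (n : ℕ) : ℝ :=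
  a ^ (n % 2) / (a * b) ^ ((n + 1) / 2) * x ^ n

section BinetTerm

variable {a b x : ℝ}

theorem qstarstar_eq_sum_binetTerm :
    qstarstar a b x = ∑ l ∈ Finset.range 4, binetTerm a b x l • e l := rfl

@[simp]
theorem binetTerm_zero : binetTerm a b x 0 = 1 := by
  simp [binetTerm]

theorem ite_mul_binetTerm_succ (ha : a ≠ 0) (hb : b ≠ 0) (n : ℕ) :
    (if Even (n + 1) then a else b) * binetTerm a b x (n + 1) = x * binetTerm a b x n := by
  obtain ⟨m, rfl | rfl⟩ := n.even_or_odd'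
  · have hn : ¬ Even (2 * m + 1) := by simp
    have hmod : (2 * m + 1) % 2 = 1 := by omega
    have hdiv : (2 * m + 1 + 1) / 2 = m + 1 := by omega
    have hdiv' : (2 * m + 1) / 2 = m := by omega
    rw [if_neg hn, binetTerm, binetTerm, hmod, hdiv, hdiv', Nat.mul_mod_right]
    field_simp
    ring
  · have hn : Even (2 * m + 1 + 1) := ⟨m + 1, by ring⟩
    have hmod : (2 * m + 1 + 1) % 2 = 0 := by omega
    have hmod' : (2 * m + 1) % 2 = 1 := by omega
    have hdiv : (2 * m + 1 + 1 + 1) / 2 = m + 1 := by omega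
    have hdiv' : (2 * m + 1 + 1) / 2 = m + 1 := by omega
    rw [if_pos hn, binetTerm, binetTerm, hmod, hmod', hdiv, hdiv']
    field_simp
    ring

theorem mul_binetTerm_one (ha : a ≠ 0) (hb : b ≠ 0) : b * binetTerm a b x 1 = x := by
  simpa using ite_mul_binetTerm_succ (x := x) ha hb 0

theorem binetTerm_add_two (ha : a ≠ 0) (hb : b ≠ 0) (hx : x ^ 2 = a * b * (x + 1)) (n : ℕ) :
    binetTerm a b x (n + 2) = (x + 1) * binetTerm a b x n := by
  have hmod : (n + 2) % 2 = n % 2 := Nat.add_mod_right n 2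
  have hdiv : (n + 2 + 1) / 2 = (n + 1) / 2 + 1 := by omega
  rw [binetTerm, binetTerm, hmod, hdiv, pow_add x, hx]
  field_simp
  ring

theorem binetTerm_two_mul_add (ha : a ≠ 0) (hb : b ≠ 0) (hx : x ^ 2 = a * b * (x + 1))
    (r l : ℕ) : binetTerm a b x (2 * r + l) = (x + 1) ^ r * binetTerm a b x l := by
  induction r with
  | zero => simp
  | succ r ih =>
    rw [show 2 * (r + 1) + l = 2 * r + l + 2 by ring, binetTerm_add_two ha hb hx, ih, pow_succ']
    ring

theorem binetTerm_recurrence (ha : a ≠ 0) (hb : b ≠ 0) (hx : x ^ 2 = a * b * (x + 1)) (n : ℕ) :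
    binetTerm a b x (n + 2) =
      (if Even (n + 1) then a else b) * binetTerm a b x (n + 1) + binetTerm a b x n := by
  rw [ite_mul_binetTerm_succ ha hb, binetTerm_add_two ha hb hx]
  ring

end BinetTerm

section Binet

variable {a b w0 w1 α β A B : ℝ}

theorem w_succ_eq_binetTerm (ha : a ≠ 0) (hb : b ≠ 0) (hα : α ^ 2 = a * b * (α + 1))
    (hβ : β ^ 2 = a * b * (β + 1)) (h₁ : A - B = w1)
    (h₂ : A * α - B * β = b * (a * w1 + w0)) (n : ℕ) :
    w a b w0 w1 (n + 1) = A * binetTerm a b α n - B * binetTerm a b β n := by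
  induction n using Nat.twoStepInduction with
  | zero => simp [w, h₁]
  | one =>
    have hw : w a b w0 w1 2 = a * w1 + w0 := by simp [w]
    refine mul_left_cancel₀ hb ?_
    rw [hw]
    linear_combination
      -h₂ - A * mul_binetTerm_one (x := α) ha hb + B * mul_binetTerm_one (x := β) ha hb
  | more n ih ih' =>
    have hparity : Even (n + 1 + 2) ↔ Even (n + 1) := by simp [Nat.even_add]
    rw [w, ih, ih', binetTerm_recurrence ha hb hα, binetTerm_recurrence ha hb hβ]
    simp only [hparity]
    ring

theorem W_two_mul_add_one (ha : a ≠ 0) (hb : b ≠ 0) (hα : α ^ 2 = a * b * (α + 1))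
    (hβ : β ^ 2 = a * b * (β + 1)) (h₁ : A - B = w1)
    (h₂ : A * α - B * β = b * (a * w1 + w0)) (r : ℕ) :
    W a b w0 w1 (2 * r + 1) =
      (A * (α + 1) ^ r) • qstarstar a b α - (B * (β + 1) ^ r) • qstarstar a b β := by
  simp only [W, qstarstar_eq_sum_binetTerm, Finset.smul_sum, ← Finset.sum_sub_distrib]
  refine Finset.sum_congr rfl fun l _ => ?_
  rw [add_right_comm, w_succ_eq_binetTerm ha hb hα hβ h₁ h₂, binetTerm_two_mul_add ha hb hα,
    binetTerm_two_mul_add ha hb hβ]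
  module

end Binet

theorem mul_geom_sum_add_one {R : Type*} [CommRing R] {p x y : R} (hadd : x + y = p)
    (hmul : x * y = -p) (n : ℕ) :
    p * ∑ r ∈ Finset.range (n + 1), (x + 1) ^ r = x * (x + 1) ^ n + y := by
  have hgeom : (∑ r ∈ Finset.range (n + 1), (x + 1) ^ r) * x = (x + 1) ^ (n + 1) - 1 := by
    simpa using geom_sum_mul (x + 1) (n + 1)
  calc p * ∑ r ∈ Finset.range (n + 1), (x + 1) ^ r
      = -y * ((∑ r ∈ Finset.range (n + 1), (x + 1) ^ r) * x) := by
        linear_combination (∑ r ∈ Finset.range (n + 1), (x + 1) ^ r) * hmul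
    _ = -y * ((x + 1) ^ (n + 1) - 1) := by rw [hgeom]
    _ = x * (x + 1) ^ n + y := by
        linear_combination (-(x + 1) ^ n) * (hmul + hadd)

theorem smul_sum_W_odd {a b w0 w1 α β A B : ℝ} (ha : a ≠ 0) (hb : b ≠ 0)
    (hadd : α + β = a * b) (hmul : α * β = -(a * b)) (h₁ : A - B = w1)
    (h₂ : A * α - B * β = b * (a * w1 + w0)) (n : ℕ) :
    (a * b) • ∑ r ∈ Finset.range (n + 1), W a b w0 w1 (2 * r + 1) =
      W a b w0 w1 (2 * (n + 1) + 1) - W a b w0 w1 (2 * n + 1) +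
        ((A * β) • qstarstar a b α - (B * α) • qstarstar a b β) := by
  have hα : α ^ 2 = a * b * (α + 1) := by linear_combination α * hadd - hmul
  have hβ : β ^ 2 = a * b * (β + 1) := by linear_combination β * hadd - hmul
  have hsumα := mul_geom_sum_add_one hadd hmul n
  have hsumβ := mul_geom_sum_add_one ((add_comm β α).trans hadd) ((mul_comm β α).trans hmul) n
  simp only [W_two_mul_add_one ha hb hα hβ h₁ h₂, Finset.sum_sub_distrib, ← Finset.sum_smul,
    ← Finset.mul_sum]
  calc (a * b) • ((A * ∑ r ∈ Finset.range (n + 1), (α + 1) ^ r) • qstarstar a b α -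
        (B * ∑ r ∈ Finset.range (n + 1), (β + 1) ^ r) • qstarstar a b β)
      = (A * (a * b * ∑ r ∈ Finset.range (n + 1), (α + 1) ^ r)) • qstarstar a b α -
          (B * (a * b * ∑ r ∈ Finset.range (n + 1), (β + 1) ^ r)) • qstarstar a b β := by module
    _ = (A * (α * (α + 1) ^ n + β)) • qstarstar a b α -
          (B * (β * (β + 1) ^ n + α)) • qstarstar a b β := by rw [hsumα, hsumβ]
    _ = (A * (α + 1) ^ (n + 1)) • qstarstar a b α - (B * (β + 1) ^ (n + 1)) • qstarstar a b β -
          ((A * (α + 1) ^ n) • qstarstar a b α - (B * (β + 1) ^ n) • qstarstar a b β) +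
          ((A * β) • qstarstar a b α - (B * α) • qstarstar a b β) := by module

/-- Summation formula for the odd-indexed generalized bi-periodic Fibonacci quaternions. -/
theorem stmt15 (a b w0 w1 α β A B : ℝ)
    (ha : a ≠ 0) (hb : b ≠ 0) (hD : a ^ 2 * b ^ 2 + 4 * (a * b) > 0)
    (hα : α = (a * b + Real.sqrt (a ^ 2 * b ^ 2 + 4 * (a * b))) / 2)
    (hβ : β = (a * b - Real.sqrt (a ^ 2 * b ^ 2 + 4 * (a * b))) / 2)
    (hA : A = (α * w1 + b * w0) / (α - β))
    (hB : B = (β * w1 + b * w0) / (α - β))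
    (n : ℕ) (hn : 1 ≤ n) :
    ∑ r ∈ Finset.range n, W a b w0 w1 (2 * r + 1) =
      (a * b)⁻¹ • (W a b w0 w1 (2 * n + 1) - W a b w0 w1 (2 * n - 1)) +
        (a * b)⁻¹ • ((A * β) • qstarstar a b α - (B * α) • qstarstar a b β) := by
  have hsq := Real.sq_sqrt hD.le
  have hadd : α + β = a * b := by rw [hα, hβ]; ring
  have hmul : α * β = -(a * b) := by rw [hα, hβ]; linear_combination -hsq / 4
  have hsub : α - β = Real.sqrt (a ^ 2 * b ^ 2 + 4 * (a * b)) := by rw [hα, hβ]; ring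
  have hne : α - β ≠ 0 := hsub ▸ (Real.sqrt_pos.mpr hD).ne'
  have h₁ : A - B = w1 := by rw [hA, hB]; field_simp; ring
  have h₂ : A * α - B * β = b * (a * w1 + w0) := by
    have hnum : A * α - B * β = (α + β) * w1 + b * w0 := by rw [hA, hB]; field_simp; ring
    rw [hnum, hadd]; ring
  obtain ⟨k, rfl⟩ := Nat.exists_eq_add_of_le' hn
  rw [← smul_add, eq_inv_smul_iff₀ (mul_ne_zero ha hb)]
  exact smul_sum_W_odd ha hb hadd hmul h₁ h₂ k
end
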